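/- arXiv:1209.2883 — 2 statements merged into one kernel-verified Lean document; each statement's English description precedes it below -/
import Mathlib

section
/- Let Y be a finite set, let f and g be pmfs on Y, and suppose there exists y' ∈ Y with f(y') > 0 and g(y') = 0. For λ ∈ [0,1] define f_λ = λg + (1-λ)f. Then the derivative with respect to λ of H(f_λ) tends to -∞ as λ → 1 from the left; in particular, there exists λ̃ ∈ [0,1) such that (d/dλ) H(f_λ) < 0 for all λ ∈ (λ̃, 1). -/
/-!
The derivative of `-H(f_l)` is `∑ y, (g y - f y) * (log (f_l y) + 1)`. As `l → 1⁻`, a summand with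
`g y > 0` converges, while one with `g y = 0` equals `-f y * (log ((1 - l) * f y) + 1)`, which tends
to `+∞` when `f y > 0` and vanishes when `f y = 0`. So no summand can compensate the divergence at
`y'`.
-/

open Filter Finset Real Topology

theorem tendsto_sum_atTop_of_isBoundedUnder_ge {ι α R : Type*} [AddCommGroup R] [PartialOrder R]
    [IsOrderedAddMonoid R] {s : Finset ι} {u : ι → α → R} {F : Filter α} {i : ι} (hi : i ∈ s)
    (hui : Tendsto (u i) F atTop) (hu : ∀ j ∈ s, j ≠ i → F.IsBoundedUnder (· ≥ ·) (u j)) :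
    Tendsto (fun x ↦ ∑ j ∈ s, u j x) F atTop := by
  classical
  have hrest : F.IsBoundedUnder (· ≥ ·) (∑ j ∈ s.erase i, u j) :=
    isBoundedUnder_ge_sum _ fun j hj ↦ hu j (mem_of_mem_erase hj) (ne_of_mem_erase hj)
  obtain ⟨C, hC⟩ := hrest.eventually_ge
  refine (tendsto_atTop_add_right_of_le' F C hui hC).congr fun x ↦ ?_
  rw [Finset.sum_apply, add_sum_erase s (u · x) hi]

/-- The mixture `f_l y`, as a function of `l` and of the values `a = f y` and `b = g y`. -/
def mixture (a b l : ℝ) : ℝ :=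
  l * b + (1 - l) * a

section Mixture

variable {a b l : ℝ}

theorem mixture_zero_right (a l : ℝ) : mixture a 0 l = (1 - l) * a := by
  simp [mixture]

theorem hasDerivAt_mixture (a b l : ℝ) : HasDerivAt (mixture a b) (b - a) l :=
  (((hasDerivAt_id l).mul_const b).add (((hasDerivAt_id l).const_sub 1).mul_const a)).congr_deriv
    (by ring)

theorem tendsto_mixture_nhdsLT_one (a b : ℝ) : Tendsto (mixture a b) (𝓝[<] 1) (𝓝 b) := by
  simpa [mixture] using (hasDerivAt_mixture a b 1).continuousAt.tendsto.mono_left nhdsWithin_le_nhds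

theorem hasDerivAt_mixture_mul_log (h : mixture a b l ≠ 0) :
    HasDerivAt (fun l ↦ mixture a b l * log (mixture a b l))
      ((b - a) * (log (mixture a b l) + 1)) l :=
  ((hasDerivAt_mul_log h).comp l (hasDerivAt_mixture a b l)).congr_deriv (mul_comm _ _)

theorem eventually_mixture_ne_zero (h : b ≠ 0 ∨ a ≠ 0) :
    ∀ᶠ l in 𝓝[<] (1 : ℝ), mixture a b l ≠ 0 := by
  rcases eq_or_ne b 0 with rfl | hb
  · have ha : a ≠ 0 := h.resolve_left (not_not_intro rfl)
    filter_upwards [self_mem_nhdsWithin] with l (hl : l < 1)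
    rw [mixture_zero_right]
    exact mul_ne_zero (sub_pos.2 hl).ne' ha
  · exact (tendsto_mixture_nhdsLT_one a b).eventually_ne hb

theorem eventually_hasDerivAt_mixture_mul_log (a b : ℝ) :
    ∀ᶠ l in 𝓝[<] (1 : ℝ),
      HasDerivAt (fun l ↦ mixture a b l * log (mixture a b l))
        ((b - a) * (log (mixture a b l) + 1)) l := by
  by_cases h : b ≠ 0 ∨ a ≠ 0
  · exact (eventually_mixture_ne_zero h).mono fun l ↦ hasDerivAt_mixture_mul_log
  · obtain ⟨rfl, rfl⟩ : b = 0 ∧ a = 0 := by simpa only [not_or, not_not] using h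
    simp [mixture_zero_right, hasDerivAt_const]

theorem tendsto_mul_log_mixture_of_ne_zero (a : ℝ) (hb : b ≠ 0) :
    Tendsto (fun l ↦ (b - a) * (log (mixture a b l) + 1)) (𝓝[<] 1)
      (𝓝 ((b - a) * (log b + 1))) :=
  (((tendsto_mixture_nhdsLT_one a b).log hb).add_const 1).const_mul (b - a)

theorem tendsto_mul_log_mixture_zero_atTop (ha : 0 < a) :
    Tendsto (fun l ↦ (0 - a) * (log (mixture a 0 l) + 1)) (𝓝[<] 1) atTop := by
  have hpos : ∀ᶠ l in 𝓝[<] (1 : ℝ), 0 < mixture a 0 l := by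
    filter_upwards [self_mem_nhdsWithin] with l (hl : l < 1)
    rw [mixture_zero_right]
    exact mul_pos (sub_pos.2 hl) ha
  have hlog : Tendsto (fun l ↦ log (mixture a 0 l)) (𝓝[<] 1) atBot :=
    tendsto_log_nhdsGT_zero.comp
      (tendsto_nhdsWithin_iff.2 ⟨tendsto_mixture_nhdsLT_one a 0, hpos⟩)
  exact (tendsto_atBot_add_const_right _ 1 hlog).const_mul_atBot_of_neg (sub_neg.2 ha)

theorem isBoundedUnder_ge_mul_log_mixture (hb : 0 ≤ b) (ha : b = 0 → 0 ≤ a) :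
    (𝓝[<] (1 : ℝ)).IsBoundedUnder (· ≥ ·)
      fun l ↦ (b - a) * (log (mixture a b l) + 1) := by
  rcases hb.eq_or_lt with rfl | hb
  · rcases (ha rfl).eq_or_lt with rfl | ha
    · simpa using isBoundedUnder_const
    · exact (tendsto_mul_log_mixture_zero_atTop ha).isBoundedUnder_ge_atTop
  · exact (tendsto_mul_log_mixture_of_ne_zero a hb.ne').isBoundedUnder_ge

end Mixture

theorem deriv_neg_sum_mixture_mul_log_eventuallyEq {Y : Type*} [Fintype Y] (f g : Y → ℝ) :
    (deriv fun l : ℝ ↦ -∑ y, mixture (f y) (g y) l * log (mixture (f y) (g y) l))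
      =ᶠ[𝓝[<] 1] fun l ↦ -∑ y, (g y - f y) * (log (mixture (f y) (g y) l) + 1) := by
  filter_upwards
    [eventually_all.2 fun y ↦ eventually_hasDerivAt_mixture_mul_log (f y) (g y)] with l hl
  exact (HasDerivAt.fun_sum fun y _ ↦ hl y).fun_neg.deriv

theorem deriv_entropy_tendsto_atBot_general {Y : Type*} [Fintype Y]
    (f g : Y → ℝ)
    (hf : ∀ y, g y = 0 → 0 ≤ f y) (hg : ∀ y, 0 ≤ g y)
    (y' : Y) (hfy' : 0 < f y') (hgy' : g y' = 0) :
    Tendsto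
      (deriv fun l : ℝ ↦
        -∑ y, (l * g y + (1 - l) * f y) * log (l * g y + (1 - l) * f y))
      (𝓝[<] 1) atBot ∧
    ∃ lt : ℝ, 0 ≤ lt ∧ lt < 1 ∧ ∀ l : ℝ, lt < l → l < 1 →
      deriv (fun l : ℝ ↦
        -∑ y, (l * g y + (1 - l) * f y) * log (l * g y + (1 - l) * f y)) l < 0 := by
  have hsum : Tendsto (fun l ↦ ∑ y, (g y - f y) * (log (mixture (f y) (g y) l) + 1))
      (𝓝[<] 1) atTop :=
    tendsto_sum_atTop_of_isBoundedUnder_ge (mem_univ y')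
      (by simpa only [hgy'] using tendsto_mul_log_mixture_zero_atTop hfy')
      fun y _ _ ↦ isBoundedUnder_ge_mul_log_mixture (hg y) (hf y)
  have hderiv := (tendsto_neg_atTop_atBot.comp hsum).congr'
    (deriv_neg_sum_mixture_mul_log_eventuallyEq f g).symm
  obtain ⟨lt, ⟨hlt0, hlt1⟩, hneg⟩ :=
    (mem_nhdsLT_iff_exists_mem_Ico_Ioo_subset zero_lt_one).1 (hderiv.eventually_lt_atBot 0)
  exact ⟨hderiv, lt, hlt0, hlt1, fun l hl hl1 ↦ hneg ⟨hl, hl1⟩⟩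

/-- Let `f`, `g` be pmfs on a finite set `Y` and `y'` a point with `f y' > 0`
and `g y' = 0`. For `l ∈ [0,1]` let `f_l = l • g + (1-l) • f`. Then the derivative (in `l`)
of the entropy `H(f_l)` tends to `-∞` as `l → 1⁻`; in particular there is `lt ∈ [0,1)` such
that the derivative is negative on `(lt, 1)`. -/
theorem deriv_entropy_tendsto_atBot {Y : Type*} [Fintype Y]
    (f g : Y → ℝ)
    (hf0 : ∀ y, 0 ≤ f y) (hf1 : ∑ y, f y = 1)
    (hg0 : ∀ y, 0 ≤ g y) (hg1 : ∑ y, g y = 1)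
    (y' : Y) (hfy' : 0 < f y') (hgy' : g y' = 0) :
    Filter.Tendsto
      (deriv fun l : ℝ =>
        -∑ y, (l * g y + (1 - l) * f y) * Real.log (l * g y + (1 - l) * f y))
      (nhdsWithin 1 (Set.Iio 1)) Filter.atBot ∧
    ∃ lt : ℝ, 0 ≤ lt ∧ lt < 1 ∧ ∀ l : ℝ, lt < l → l < 1 →
      deriv (fun l : ℝ =>
        -∑ y, (l * g y + (1 - l) * f y) * Real.log (l * g y + (1 - l) * f y)) l < 0 :=
  deriv_entropy_tendsto_atBot_general f g (fun y _ ↦ hf0 y) hg0 y' hfy' hgy'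
end

section
/- Let X and U be finite nonempty sets, Q a transition kernel on X controlled by U, and f* a joint pmf on X × U satisfying the stationarity constraint Σ_{u⁺} f*(x⁺,u⁺) = Σ_{x,u} Q(x⁺,x,u) f*(x,u) for all x⁺ ∈ X. Let f*_X(x) = Σ_u f*(x,u), let G be any memoryless policy, and define the policy K*(u,x) = f*(x,u)/f*_X(x) if f*_X(x) > 0 and K*(u,x) = G(u,x) otherwise. Then f* satisfies the closed-loop invariance equation under K*: f*(x⁺,u⁺) = K*(u⁺,x⁺) · Σ_{x,u} Q(x⁺,x,u) f*(x,u) for all x⁺ ∈ X, u⁺ ∈ U. -/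
/-- The policy `K*` induced by a joint mass function `f`: the conditional mass of the control given
the state, with `G` as fallback at states of zero marginal mass. As for any policy, the control is
the first argument. -/
def conditionalPolicy {X U 𝕜 : Type*} [Fintype U] [Semifield 𝕜] [LinearOrder 𝕜]
    (f : X → U → 𝕜) (G : U → X → 𝕜) (u : U) (x : X) : 𝕜 :=
  if 0 < ∑ v, f x v then f x u / ∑ v, f x v else G u x

theorem conditionalPolicy_mul_marginal {X U 𝕜 : Type*} [Fintype U]
    [Semifield 𝕜] [LinearOrder 𝕜] [IsStrictOrderedRing 𝕜]
    {f : X → U → 𝕜} {x : X} (hf : ∀ u, 0 ≤ f x u) (G : U → X → 𝕜) (u : U) :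
    conditionalPolicy f G u x * ∑ v, f x v = f x u := by
  rw [conditionalPolicy]
  split_ifs with hpos
  · exact div_mul_cancel₀ _ hpos.ne'
  · have marginal_eq_zero : ∑ v, f x v = 0 :=
      (not_lt.mp hpos).antisymm (Finset.sum_nonneg fun v _ ↦ hf v)
    have mass_eq_zero : f x u = 0 :=
      (Finset.sum_eq_zero_iff_of_nonneg fun v _ ↦ hf v).mp marginal_eq_zero u (Finset.mem_univ u)
    rw [marginal_eq_zero, mul_zero, mass_eq_zero]

theorem closed_loop_invariance_of_stationarity_general {X U 𝕜 : Type*} [Fintype X] [Fintype U]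
    [Semifield 𝕜] [LinearOrder 𝕜] [IsStrictOrderedRing 𝕜]
    (Q : X → X → U → 𝕜) (f : X → U → 𝕜) (hf : ∀ x u, 0 ≤ f x u)
    (hstat : ∀ x', ∑ u', f x' u' = ∑ x, ∑ u, Q x' x u * f x u)
    (G : U → X → 𝕜) (x' : X) (u' : U) :
    f x' u' = conditionalPolicy f G u' x' * ∑ x, ∑ u, Q x' x u * f x u := by
  rw [← hstat x', conditionalPolicy_mul_marginal (hf x')]

/-- If a joint pmf `fstar` satisfies the stationarity constraint, then it
satisfies the closed-loop invariance equation under the policy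
`K*(u,x) = fstar(x,u) / fstar_X(x)` when `fstar_X(x) > 0`, and `K*(u,x) = G(u,x)` otherwise,
where `G` is any memoryless policy. -/
theorem closed_loop_invariance_of_stationarity {X U : Type*} [Fintype X] [Fintype U]
    [Nonempty X] [Nonempty U]
    (Q : X → X → U → ℝ)
    (hQ0 : ∀ x' x u, 0 ≤ Q x' x u)
    (hQ1 : ∀ x u, ∑ x', Q x' x u = 1)
    (fstar : X → U → ℝ)
    (hfstar0 : ∀ x u, 0 ≤ fstar x u)
    (hfstar1 : ∑ x, ∑ u, fstar x u = 1)
    (hstat : ∀ x' : X, ∑ u', fstar x' u' = ∑ x, ∑ u, Q x' x u * fstar x u)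
    (G : U → X → ℝ)
    (hG0 : ∀ u x, 0 ≤ G u x)
    (hG1 : ∀ x, ∑ u, G u x = 1) :
    ∀ x' u', fstar x' u' =
      (if 0 < ∑ u, fstar x' u then fstar x' u' / ∑ u, fstar x' u else G u' x') *
        ∑ x, ∑ u, Q x' x u * fstar x u :=
  closed_loop_invariance_of_stationarity_general Q fstar hfstar0 hstat G
end
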